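/- arXiv:2211.16402 — 4 statements merged into one kernel-verified Lean document; each statement's English description precedes it below -/
import Mathlib

section
/- Let l ≥ 1, k = 2^l, N = kl, and let ED be the element distinctness function on the balanced slice of {0,1}^{N}: ED(x₁, …, x_k) = 1 if and only if the blocks x₁, …, x_k ∈ {0,1}^l are pairwise distinct. Then D(ED) ≥ log₂(k!/2); in particular D(ED) ≥ N − O(N/log N). -/
/-- A deterministic decision tree querying variables indexed by `ι`. -/
inductive DTree (ι : Type) : Type where
  | leaf : Bool → DTree ι
  | node : ι → DTree ι → DTree ι → DTree ι

namespace DTree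

/-- Evaluation of a decision tree on an input `x : ι → Bool`. -/
def eval {ι : Type} : DTree ι → (ι → Bool) → Bool
  | .leaf b, _ => b
  | .node i t0 t1, x => if x i then eval t1 x else eval t0 x

/-- The number of queries made by a decision tree on an input. -/
def cost {ι : Type} : DTree ι → (ι → Bool) → ℕ
  | .leaf _, _ => 0
  | .node i t0 t1, x => 1 + (if x i then cost t1 x else cost t0 x)

end DTree

/-- `T` computes `f` on the domain `S`. -/
def Computes {ι : Type} (T : DTree ι) (S : Set (ι → Bool)) (f : (ι → Bool) → Bool) : Prop :=
  ∀ x ∈ S, T.eval x = f x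

/-- Deterministic query complexity of `f` on the domain `S`: the least `d` such that some
decision tree computes `f` on `S` making at most `d` queries on every input in `S`. -/
noncomputable def Dquery {ι : Type} (S : Set (ι → Bool)) (f : (ι → Bool) → Bool) : ℕ :=
  sInf {d | ∃ T : DTree ι, Computes T S f ∧ ∀ x ∈ S, T.cost x ≤ d}

/-- Hamming weight of `x : ι → Bool`. -/
def hamWeight {ι : Type} [Fintype ι] (x : ι → Bool) : ℕ :=
  (Finset.univ.filter fun i => x i = true).card

/-- The `k`-th cubeSlice: inputs of Hamming weight exactly `k`. -/
def cubeSlice (ι : Type) [Fintype ι] (k : ℕ) : Set (ι → Bool) :=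
  {x | hamWeight x = k}

/-- The element distinctness function on `{0,1}^{kl}` with `k = 2^l`: the input is split
into `k` blocks of `l` bits (coordinates indexed by `Fin k × Fin l`), and the output is `1`
iff the blocks are pairwise distinct. -/
def ED (l : ℕ) (x : (Fin (2 ^ l) × Fin l) → Bool) : Bool :=
  decide (Function.Injective fun i : Fin (2 ^ l) => fun j : Fin l => x (i, j))

/-!
A decision tree making at most `d` queries has at most `2 ^ d` leaves, so it suffices that no leaf
is reached by more than two of the `k!` inputs with `ED = 1`. If such an input `x` reaches a leaf,
then swapping two unqueried bits of `x` changes neither the Hamming weight nor the answer, so the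
blocks stay distinct. As the blocks of `x` exhaust `{0,1}^l`, swapping two different bits can only
exchange two blocks which differ in a single position, so either of the two bits determines the
other. Hence the unqueried bits of `x` are all equal, or they are exactly one `0` and one `1`, and
at most two inputs of the same weight as `x` reach the leaf. The second bound follows by Stirling's
formula.
-/

section DecisionTrees

open scoped Finset

variable {ι : Type}

namespace DTree

/-- The set of variables that a decision tree queries on an input. It serves to speak about leaves:
an input `y` follows the same path as `x` iff `Set.EqOn x y (T.queried x)`. -/
def queried : DTree ι → (ι → Bool) → Set ι
  | .leaf _, _ => ∅
  | .node i t0 t1, x => insert i (if x i then queried t1 x else queried t0 x)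

theorem eval_eq_of_eqOn_queried (T : DTree ι) {x y : ι → Bool}
    (h : Set.EqOn x y (T.queried x)) : T.eval x = T.eval y := by
  induction T with
  | leaf b => rfl
  | node i t0 t1 ih0 ih1 =>
    have hi : x i = y i := h (Set.mem_insert i _)
    have hrest := h.mono (Set.subset_insert i _)
    cases hx : x i <;> simp_all [eval]

open scoped Classical in
theorem card_le_mul_two_pow (T : DTree ι) {A : Finset (ι → Bool)} {d m : ℕ}
    (hcost : ∀ x ∈ A, T.cost x ≤ d)
    (hfiber : ∀ x ∈ A, #{y ∈ A | Set.EqOn x y (T.queried x)} ≤ m) :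
    #A ≤ m * 2 ^ d := by
  induction T generalizing A d with
  | leaf b =>
    obtain rfl | ⟨x, hx⟩ := A.eq_empty_or_nonempty
    · simp
    · have hA : #A ≤ m := by simpa [queried] using hfiber x hx
      exact hA.trans (Nat.le_mul_of_pos_right m (by positivity))
  | node i t0 t1 ih0 ih1 =>
    obtain rfl | ⟨x, hx⟩ := A.eq_empty_or_nonempty
    · simp
    obtain ⟨e, rfl⟩ : ∃ e, d = e + 1 :=
      Nat.exists_eq_add_one.2 (by have := hcost x hx; simp only [cost] at this; omega)
    have half (b : Bool) : #{x ∈ A | x i = b} ≤ m * 2 ^ e := by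
      have hcost' : ∀ x ∈ A.filter (· i = b), (if b then t1 else t0).cost x ≤ e := by
        intro x hx
        obtain ⟨hxA, rfl⟩ := Finset.mem_filter.1 hx
        have := hcost x hxA
        simp only [cost] at this
        split_ifs at this ⊢ <;> omega
      have hfiber' : ∀ x ∈ A.filter (· i = b),
          #{y ∈ A.filter (· i = b) | Set.EqOn x y ((if b then t1 else t0).queried x)} ≤ m := by
        intro x hx
        obtain ⟨hxA, rfl⟩ := Finset.mem_filter.1 hx
        refine le_of_eq_of_le (congrArg _ ?_) (hfiber x hxA)
        ext y
        simp only [Finset.mem_filter, queried, apply_ite (DTree.queried · x), Set.EqOn,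
          Set.forall_mem_insert, and_assoc, eq_comm (a := y i)]
      cases b
      exacts [ih0 hcost' hfiber', ih1 hcost' hfiber']
    calc #A = #{x ∈ A | x i = true} + #{x ∈ A | x i = false} := by
          simpa using (Finset.card_filter_add_card_filter_not (s := A) (· i = true)).symm
      _ ≤ m * 2 ^ e + m * 2 ^ e := add_le_add (half true) (half false)
      _ = m * 2 ^ (e + 1) := by ring

theorem exists_eval_eq_of_dependsOn {s : Finset ι} {f : (ι → Bool) → Bool}
    (hf : DependsOn f (s : Set ι)) : ∃ T : DTree ι, T.eval = f := by
  classical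
  induction s using Finset.induction_on generalizing f with
  | empty => exact ⟨.leaf (f fun _ => false), funext fun x => hf (by simp)⟩
  | insert i s hi ih =>
    have restrict (b : Bool) : ∃ T : DTree ι, T.eval = fun x => f (Function.update x i b) :=
      ih (by simpa [Finset.erase_insert hi] using hf.update i b)
    obtain ⟨T0, h0⟩ := restrict false
    obtain ⟨T1, h1⟩ := restrict true
    refine ⟨.node i T0 T1, funext fun x => ?_⟩
    cases hx : x i <;> simp only [eval, hx, h0, h1, if_true, Bool.false_eq_true, if_false] <;>
      rw [← hx, Function.update_eq_self]

end DTree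

theorem Computes.apply_eq_of_eqOn_queried {T : DTree ι} {S : Set (ι → Bool)}
    {f : (ι → Bool) → Bool} (hT : Computes T S f) {x y : ι → Bool} (hx : x ∈ S) (hy : y ∈ S)
    (h : Set.EqOn x y (T.queried x)) : f x = f y := by
  rw [← hT x hx, ← hT y hy, T.eval_eq_of_eqOn_queried h]

theorem exists_computes_cost_le_dquery [Finite ι] (S : Set (ι → Bool)) (f : (ι → Bool) → Bool) :
    ∃ T : DTree ι, Computes T S f ∧ ∀ x ∈ S, T.cost x ≤ Dquery S f := by
  have := Fintype.ofFinite ι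
  classical
  obtain ⟨T, rfl⟩ := DTree.exists_eval_eq_of_dependsOn (s := Finset.univ)
    (by simpa using dependsOn_univ f)
  exact Nat.sInf_mem (s := {d | ∃ T' : DTree ι, Computes T' S T.eval ∧ ∀ x ∈ S, T'.cost x ≤ d})
    ⟨Finset.univ.sup T.cost, T, fun _ _ => rfl, fun x _ => Finset.le_sup (Finset.mem_univ x)⟩

end DecisionTrees

section HammingWeight

variable {ι : Type} [Fintype ι]

theorem hamWeight_strictMono : StrictMono (hamWeight : (ι → Bool) → ℕ) := by
  intro x y hxy
  obtain ⟨hle, i, hi⟩ := Pi.lt_def.1 hxy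
  obtain ⟨hxi, hyi⟩ := Bool.lt_iff.1 hi
  have hsub : Finset.univ.filter (x · = true) ⊆ Finset.univ.filter (y · = true) :=
    Finset.monotone_filter_right _ fun j _ => Bool.le_iff_imp.1 (hle j)
  exact Finset.card_lt_card
    ((Finset.ssubset_iff_of_subset hsub).2 ⟨i, by simp [hyi], by simp [hxi]⟩)

theorem hamWeight_comp_perm (x : ι → Bool) (e : Equiv.Perm ι) : hamWeight (x ∘ e) = hamWeight x :=
  Finset.card_equiv e (by simp)

theorem hamWeight_add_hamWeight_compl (x : ι → Bool) :
    hamWeight x + hamWeight xᶜ = Fintype.card ι := by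
  simpa [hamWeight] using
    Finset.card_filter_add_card_filter_not (s := Finset.univ) fun i => x i = true

theorem eq_of_hamWeight_eq_of_eqOn_compl {x y : ι → Bool} {F : Set ι}
    (hw : hamWeight x = hamWeight y) (hxy : Set.EqOn x y Fᶜ)
    (hF : ∀ p ∈ F, ∀ q ∈ F, x p = x q) : x = y := by
  suffices x ≤ y ∨ y ≤ x by
    rcases this with h | h
    · exact h.eq_of_not_lt fun hlt => (hamWeight_strictMono hlt).ne hw
    · exact (h.eq_of_not_lt fun hlt => (hamWeight_strictMono hlt).ne' hw).symm
  by_cases h : ∃ p ∈ F, x p = true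
  · obtain ⟨p, hp, hxp⟩ := h
    refine .inr fun r => ?_
    by_cases hr : r ∈ F
    · simp [hF r hr p hp, hxp, Bool.le_true]
    · exact (hxy hr).ge
  · push Not at h
    refine .inl fun r => ?_
    by_cases hr : r ∈ F
    · simp [h r hr, Bool.false_le]
    · exact (hxy hr).le

theorem exists_forall_eq_or_eq_of_eqOn_compl (x : ι → Bool) {F : Set ι}
    (hF : ∀ p ∈ F, ∀ q ∈ F, ∀ r ∈ F, x p ≠ x r → x q ≠ x r → p = q) :
    ∃ z, ∀ y, hamWeight x = hamWeight y → Set.EqOn x y Fᶜ → y = x ∨ y = z := by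
  classical
  by_cases hconst : ∀ p ∈ F, ∀ q ∈ F, x p = x q
  · exact ⟨x, fun y hw hxy => .inl (eq_of_hamWeight_eq_of_eqOn_compl hw hxy hconst).symm⟩
  push Not at hconst
  obtain ⟨p, hp, q, hq, hpq⟩ := hconst
  have hFpq : ∀ r ∈ F, r = p ∨ r = q := fun r hr => by
    by_cases hrq : x r = x q
    · exact .inr (hF r hr q hq p hp (hrq ▸ hpq.symm) hpq.symm)
    · exact .inl (hF r hr p hp q hq hrq hpq)
  refine ⟨x ∘ Equiv.swap p q, fun y hw hxy => ?_⟩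
  by_cases hyp : x p = y p
  · refine .inl (eq_of_hamWeight_eq_of_eqOn_compl (F := {q}) hw (fun r hr => ?_) (by simp)).symm
    by_cases hrF : r ∈ F
    · obtain rfl := (hFpq r hrF).resolve_right hr
      exact hyp
    · exact hxy hrF
  · have hxq : x q = y p :=
      (Bool.eq_not_of_ne hpq.symm).trans (Bool.eq_not_of_ne (Ne.symm hyp)).symm
    refine .inr (eq_of_hamWeight_eq_of_eqOn_compl (F := {q}) ((hamWeight_comp_perm x _).trans hw)
      (fun r hr => ?_) (by simp)).symm
    by_cases hrp : r = p
    · simpa [hrp] using hxq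
    · rw [Function.comp_apply, Equiv.swap_apply_of_ne_of_ne hrp hr]
      exact hxy fun hrF => (hFpq r hrF).elim hrp hr

end HammingWeight

section Blocks

variable {α β : Type}

theorem hamWeight_eq_sum_curry [Fintype α] [Fintype β] (x : α × β → Bool) :
    hamWeight x = ∑ i, hamWeight (Function.curry x i) := by
  simp only [hamWeight, Finset.card_filter, Fintype.sum_prod_type]
  rfl

theorem two_mul_hamWeight_of_bijective_curry [Fintype α] [Fintype β] {x : α × β → Bool}
    (hx : Function.Bijective (Function.curry x)) :
    2 * hamWeight x = Fintype.card α * Fintype.card β := by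
  classical
  have hsum : hamWeight x = ∑ v : β → Bool, hamWeight v := by
    rw [hamWeight_eq_sum_curry]
    exact hx.sum_comp hamWeight
  have hsum_compl : hamWeight x = ∑ v : β → Bool, hamWeight vᶜ := by
    rw [hsum]
    exact (compl_involutive.bijective.sum_comp hamWeight).symm
  calc 2 * hamWeight x = ∑ v : β → Bool, (hamWeight v + hamWeight vᶜ) := by
        rw [Finset.sum_add_distrib, ← hsum, ← hsum_compl, two_mul]
    _ = Fintype.card (β → Bool) * Fintype.card β := by
        simp [hamWeight_add_hamWeight_compl]
    _ = Fintype.card α * Fintype.card β := by rw [Fintype.card_of_bijective hx]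

theorem apply_eq_of_surjective_of_injective {γ δ : Type*} {f g : γ → δ} {i j : γ}
    (hf : Function.Surjective f) (hg : Function.Injective g)
    (hfg : ∀ m, m ≠ i → m ≠ j → f m = g m) (hi : f i ≠ g i) : g i = f j := by
  obtain ⟨m, hm⟩ := hf (g i)
  have hmi : m ≠ i := fun h => hi (h ▸ hm)
  by_cases hmj : m = j
  · rw [← hmj, hm]
  · exact absurd (hg ((hfg m hmi hmj).symm.trans hm)) hmi

variable [DecidableEq α] [DecidableEq β] {x : α × β → Bool}

theorem curry_comp_swap_fst {p q : α × β} (hx : Function.Surjective (Function.curry x))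
    (hswap : Function.Injective (Function.curry (x ∘ Equiv.swap p q))) (hpq : x p ≠ x q) :
    Function.curry (x ∘ Equiv.swap p q) p.1 = Function.curry x q.1 := by
  refine apply_eq_of_surjective_of_injective hx hswap (fun m hp hq => funext fun t => ?_) ?_
  · have hfix : Equiv.swap p q (m, t) = (m, t) :=
      Equiv.swap_apply_of_ne_of_ne (fun h => hp (congrArg Prod.fst h))
        fun h => hq (congrArg Prod.fst h)
    simp only [Function.curry, Function.comp_apply, hfix]
  · intro h
    simpa [Function.curry, hpq] using congrFun h p.2

theorem snd_eq_and_apply_eq_of_injective_curry_comp_swap {p q : α × β}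
    (hx : Function.Bijective (Function.curry x))
    (hswap : Function.Injective (Function.curry (x ∘ Equiv.swap p q))) (hpq : x p ≠ x q) :
    p.2 = q.2 ∧ ∀ t ≠ q.2, x (p.1, t) = x (q.1, t) := by
  have hp (t : β) : x (Equiv.swap p q (p.1, t)) = x (q.1, t) :=
    congrFun (curry_comp_swap_fst hx.2 hswap hpq) t
  have hq (t : β) : x (Equiv.swap p q (q.1, t)) = x (p.1, t) := by
    rw [Equiv.swap_comm]
    exact congrFun (curry_comp_swap_fst hx.2 (Equiv.swap_comm p q ▸ hswap) hpq.symm) t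
  have hfst : p.1 ≠ q.1 := fun h => hpq (by simpa [← h] using (hp p.2).symm)
  have hsnd : p.2 = q.2 := by
    by_contra hne
    have hfix : Equiv.swap p q (q.1, p.2) = (q.1, p.2) :=
      Equiv.swap_apply_of_ne_of_ne (fun h => hfst (congrArg Prod.fst h).symm)
        fun h => hne (by simpa using congrArg Prod.snd h)
    apply hpq
    calc x p = x (Equiv.swap p q (q.1, p.2)) := (hq p.2).symm
      _ = x (q.1, p.2) := by rw [hfix]
      _ = x (Equiv.swap p q (p.1, p.2)) := (hp p.2).symm
      _ = x q := by simp
  refine ⟨hsnd, fun t ht => ?_⟩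
  have hfix : Equiv.swap p q (p.1, t) = (p.1, t) :=
    Equiv.swap_apply_of_ne_of_ne (fun h => ht (by simpa [hsnd] using congrArg Prod.snd h))
      fun h => hfst (by simpa using congrArg Prod.fst h)
  rw [← hp t, hfix]

theorem eq_of_injective_curry_comp_swap {p q r : α × β}
    (hx : Function.Bijective (Function.curry x))
    (hp : Function.Injective (Function.curry (x ∘ Equiv.swap p r)))
    (hq : Function.Injective (Function.curry (x ∘ Equiv.swap q r)))
    (hpr : x p ≠ x r) (hqr : x q ≠ x r) : p = q := by
  obtain ⟨hpr2, hprx⟩ := snd_eq_and_apply_eq_of_injective_curry_comp_swap hx hp hpr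
  obtain ⟨hqr2, hqrx⟩ := snd_eq_and_apply_eq_of_injective_curry_comp_swap hx hq hqr
  refine Prod.ext (hx.1 (funext fun t => ?_)) (hpr2.trans hqr2.symm)
  by_cases ht : t = r.2
  · have hxpq : x p = x q := (Bool.eq_not_of_ne hpr).trans (Bool.eq_not_of_ne hqr).symm
    calc x (p.1, t) = x p := by rw [ht, ← hpr2]
      _ = x q := hxpq
      _ = x (q.1, t) := by rw [ht, ← hqr2]
  · exact (hprx t ht).trans (hqrx t ht).symm

end Blocks

section ElementDistinctness

open scoped Finset

variable {l : ℕ} {x : Fin (2 ^ l) × Fin l → Bool}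

theorem ed_eq_true_iff_injective : ED l x = true ↔ Function.Injective (Function.curry x) :=
  decide_eq_true_iff

theorem ed_eq_true_iff_bijective : ED l x = true ↔ Function.Bijective (Function.curry x) := by
  rw [ed_eq_true_iff_injective, Fintype.bijective_iff_injective_and_card]
  simp

theorem card_filter_ed_eq_true (l : ℕ) : #{x | ED l x = true} = (2 ^ l).factorial := by
  classical
  have e : {x // ED l x = true} ≃ (Fin (2 ^ l) ↪ (Fin l → Bool)) :=
    ((Equiv.curry _ _ _).subtypeEquiv fun _ => ed_eq_true_iff_injective).trans
      (Equiv.subtypeInjectiveEquivEmbedding _ _)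
  rw [← Fintype.card_subtype, Fintype.card_congr e, Fintype.card_embedding_eq]
  simp [Nat.descFactorial_self]

theorem mem_cubeSlice_of_ed_eq_true (hx : ED l x = true) :
    x ∈ cubeSlice (Fin (2 ^ l) × Fin l) (2 ^ l * l / 2) := by
  have := two_mul_hamWeight_of_bijective_curry (ed_eq_true_iff_bijective.1 hx)
  simp only [Fintype.card_fin] at this
  exact (Nat.div_eq_of_eq_mul_right two_pos this.symm).symm

theorem Computes.injective_curry_comp_swap {T : DTree (Fin (2 ^ l) × Fin l)}
    (hT : Computes T (cubeSlice (Fin (2 ^ l) × Fin l) (2 ^ l * l / 2)) (ED l))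
    (hx : ED l x = true) {p q : Fin (2 ^ l) × Fin l} (hp : p ∉ T.queried x)
    (hq : q ∉ T.queried x) : Function.Injective (Function.curry (x ∘ Equiv.swap p q)) := by
  have hmem := mem_cubeSlice_of_ed_eq_true hx
  rw [← ed_eq_true_iff_injective, ← hx]
  refine (hT.apply_eq_of_eqOn_queried hmem ((hamWeight_comp_perm x _).trans hmem)
    fun r hr => ?_).symm
  rw [Function.comp_apply, Equiv.swap_apply_of_ne_of_ne (ne_of_mem_of_not_mem hr hp)
    (ne_of_mem_of_not_mem hr hq)]

open scoped Classical in
theorem Computes.card_filter_ed_eqOn_queried_le_two {T : DTree (Fin (2 ^ l) × Fin l)}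
    (hT : Computes T (cubeSlice (Fin (2 ^ l) × Fin l) (2 ^ l * l / 2)) (ED l))
    (hx : ED l x = true) :
    #{y ∈ ({y | ED l y = true} : Finset _) | Set.EqOn x y (T.queried x)} ≤ 2 := by
  obtain ⟨z, hz⟩ := exists_forall_eq_or_eq_of_eqOn_compl x (F := (T.queried x)ᶜ)
    fun p hp q hq r hr => eq_of_injective_curry_comp_swap (ed_eq_true_iff_bijective.1 hx)
      (hT.injective_curry_comp_swap hx hp hr) (hT.injective_curry_comp_swap hx hq hr)
  refine (Finset.card_le_card (t := {x, z}) fun y hy => ?_).trans Finset.card_le_two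
  simp only [Finset.mem_filter, Finset.mem_univ, true_and] at hy
  have hw : hamWeight x = hamWeight y :=
    (mem_cubeSlice_of_ed_eq_true hx).trans (mem_cubeSlice_of_ed_eq_true hy.1).symm
  simpa using hz y hw (by rw [compl_compl]; exact hy.2)

theorem factorial_le_two_mul_two_pow_dquery_ed (l : ℕ) :
    (2 ^ l).factorial ≤
      2 * 2 ^ Dquery (cubeSlice (Fin (2 ^ l) × Fin l) (2 ^ l * l / 2)) (ED l) := by
  obtain ⟨T, hT, hcost⟩ :=
    exists_computes_cost_le_dquery (cubeSlice (Fin (2 ^ l) × Fin l) (2 ^ l * l / 2)) (ED l)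
  rw [← card_filter_ed_eq_true]
  refine T.card_le_mul_two_pow (fun x hx => hcost x ?_) fun x hx => ?_
  · exact mem_cubeSlice_of_ed_eq_true (Finset.mem_filter.1 hx).2
  · exact hT.card_filter_ed_eqOn_queried_le_two (Finset.mem_filter.1 hx).2

theorem logb_factorial_div_two_le_dquery_ed (l : ℕ) :
    Real.logb 2 ((2 ^ l).factorial / 2) ≤
      Dquery (cubeSlice (Fin (2 ^ l) × Fin l) (2 ^ l * l / 2)) (ED l) := by
  rw [Real.logb_le_iff_le_rpow one_lt_two (by positivity), Real.rpow_natCast,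
    div_le_iff₀' two_pos]
  exact_mod_cast factorial_le_two_mul_two_pow_dquery_ed l

end ElementDistinctness

section Asymptotics

theorem mul_logb_sub_div_log_le_logb_factorial {b : ℝ} (hb : 1 < b) (n : ℕ) :
    n * Real.logb b n - n / Real.log b ≤ Real.logb b n.factorial := by
  obtain rfl | hn := eq_or_ne n 0
  · simp
  have hlog : n * Real.log n - n ≤ Real.log n.factorial := by
    have hstirling := Stirling.le_log_factorial_stirling hn
    have hlog_nonneg : 0 ≤ Real.log n := Real.log_natCast_nonneg n
    have hlog_two_pi_nonneg : 0 ≤ Real.log (2 * Real.pi) :=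
      Real.log_nonneg (by linarith [Real.pi_gt_three])
    linarith
  have hdiv := div_le_div_of_nonneg_right hlog (Real.log_pos hb).le
  rwa [sub_div, mul_div_assoc] at hdiv

theorem two_pow_mul_sub_le_logb_factorial_div_two (l : ℕ) :
    ((2 ^ l * l : ℕ) : ℝ) - 3 * 2 ^ l ≤ Real.logb 2 ((2 ^ l).factorial / 2) := by
  have hlog_two : (2 : ℝ) ^ l / Real.log 2 ≤ 2 * 2 ^ l := by
    rw [div_le_iff₀ (Real.log_pos one_lt_two)]
    nlinarith [Real.log_two_gt_d9, pow_pos (two_pos : (0 : ℝ) < 2) l]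
  have hone : (1 : ℝ) ≤ 2 ^ l := one_le_pow₀ one_le_two
  have hfact := mul_logb_sub_div_log_le_logb_factorial one_lt_two (2 ^ l)
  have hlogb : Real.logb 2 ((2 : ℝ) ^ l) = l := by simp [Real.logb_pow]
  rw [Real.logb_div (by positivity) two_ne_zero, Real.logb_self_eq_one one_lt_two]
  push_cast [hlogb] at hfact ⊢
  linarith

theorem two_pow_le_two_mul_div_logb {l : ℕ} (hl : 1 ≤ l) :
    (2 : ℝ) ^ l ≤ 2 * (((2 ^ l * l : ℕ) : ℝ) / Real.logb 2 ((2 ^ l * l : ℕ) : ℝ)) := by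
  have hl_lt : l < 2 ^ l := Nat.lt_two_pow_self
  have hgt : 1 < 2 ^ l * l := by nlinarith
  have hlogb_pos : 0 < Real.logb 2 ((2 ^ l * l : ℕ) : ℝ) :=
    Real.logb_pos one_lt_two (by exact_mod_cast hgt)
  have hlogb_le : Real.logb 2 ((2 ^ l * l : ℕ) : ℝ) ≤ 2 * l := by
    have hle : 2 ^ l * l ≤ 2 ^ (2 * l) := by
      rw [two_mul, pow_add]
      gcongr
    have := Real.logb_le_logb_of_le one_lt_two (by positivity)
      (by exact_mod_cast hle : ((2 ^ l * l : ℕ) : ℝ) ≤ 2 ^ (2 * l))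
    simpa [Real.logb_pow] using this
  rw [← mul_div_assoc, le_div_iff₀ hlogb_pos]
  calc (2 : ℝ) ^ l * Real.logb 2 ((2 ^ l * l : ℕ) : ℝ) ≤ 2 ^ l * (2 * l) := by gcongr
    _ = 2 * ((2 ^ l * l : ℕ) : ℝ) := by push_cast; ring

end Asymptotics

/-- On the balanced slice of `{0,1}^N` (`N = kl`, `k = 2^l`), element distinctness has
deterministic query complexity at least `log₂(k!/2)`; in particular
`D(ED) ≥ N - O(N / log N)`. -/
theorem stmt16 :
    (∀ l : ℕ, 1 ≤ l →
      Real.logb 2 ((Nat.factorial (2 ^ l) : ℝ) / 2) ≤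
        (Dquery (cubeSlice (Fin (2 ^ l) × Fin l) (2 ^ l * l / 2)) (ED l) : ℝ)) ∧
    (∃ c : ℝ, 0 < c ∧ ∀ l : ℕ, 1 ≤ l →
      ((2 ^ l * l : ℕ) : ℝ) - c * (((2 ^ l * l : ℕ) : ℝ) / Real.logb 2 ((2 ^ l * l : ℕ) : ℝ)) ≤
        (Dquery (cubeSlice (Fin (2 ^ l) × Fin l) (2 ^ l * l / 2)) (ED l) : ℝ)) := by
  refine ⟨fun l _ => logb_factorial_div_two_le_dquery_ed l, 6, by norm_num, fun l hl => ?_⟩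
  calc ((2 ^ l * l : ℕ) : ℝ) - 6 * (((2 ^ l * l : ℕ) : ℝ) / Real.logb 2 ((2 ^ l * l : ℕ) : ℝ))
      ≤ ((2 ^ l * l : ℕ) : ℝ) - 3 * 2 ^ l := by linarith [two_pow_le_two_mul_div_logb hl]
    _ ≤ Real.logb 2 ((2 ^ l).factorial / 2) := two_pow_mul_sub_le_logb_factorial_div_two l
    _ ≤ _ := logb_factorial_div_two_le_dquery_ed l
end

section
/- Let f : {0,1}^n → {0,1} and g : {0,1}^m → {0,1} be symmetric Boolean functions and let N = nm. Then for every 0 ≤ w ≤ N, the restriction of the composed function f∘g to the slice {z ∈ {0,1}^N : |z| = w} satisfies D(f∘g) ≤ min{(n−1)·m, nm − ⌈n/m⌉}, and consequently D(f∘g) ≤ N − N^{1/3}. -/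
/-- A Boolean function is symmetric if its value depends only on the Hamming weight of
its input. -/
def SymmFun {ι : Type} [Fintype ι] (f : (ι → Bool) → Bool) : Prop :=
  ∀ x y : ι → Bool, hamWeight x = hamWeight y → f x = f y

/-!
On the slice `|z| = w`, all blocks but one determine the weight of the last block, hence the value
of the symmetric `g` on it: this saves `m` queries.

Alternatively, query all but one bit in every block. The partial block weights lie in
`{0, …, m - 1}`, so some weight `a` occurs in at least `⌈n / m⌉` blocks. Complete the other blocks.
Each popular block has weight `a` or `a + 1`, and on these two weights `g` is an affine function of
the weight; so the number of blocks on which `g` is true is determined by what was queried and the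
total weight `w`, and the last bits of the popular blocks need not be queried.

Since `nm ≤ m² ⌈n / m⌉`, the larger of the two savings is at least `(nm)^(1/3)`.
-/

theorem apply_update_congr {ι α β : Type*} [DecidableEq ι] {k : (ι → α) → β} {i : ι} {l : List ι}
    (hk : ∀ x y, (∀ j ∈ i :: l, x j = y j) → k x = k y) (b : α) (x y : ι → α)
    (h : ∀ j ∈ l, x j = y j) : k (Function.update x i b) = k (Function.update y i b) := by
  refine hk _ _ fun j hj => ?_
  by_cases hji : j = i
  · simp [hji]
  · simpa [hji] using h j (List.mem_of_ne_of_mem hji hj)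

namespace DTree

/-- The tree that queries the variables in the list `l` one after another and continues as `k v`,
where `v` is the assignment it has seen. Variables outside `l` are `false` in `v`. -/
def query {ι : Type} [DecidableEq ι] : List ι → ((ι → Bool) → DTree ι) → DTree ι
  | [], k => k fun _ => false
  | i :: l, k => node i (query l fun v => k (Function.update v i false))
      (query l fun v => k (Function.update v i true))

section Query

variable {ι : Type}

theorem eval_node_apply (i : ι) (t : Bool → DTree ι) (x : ι → Bool) :
    (node i (t false) (t true)).eval x = (t (x i)).eval x := by
  cases h : x i <;> simp [eval, h]

theorem cost_node_apply (i : ι) (t : Bool → DTree ι) (x : ι → Bool) :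
    (node i (t false) (t true)).cost x = 1 + (t (x i)).cost x := by
  cases h : x i <;> simp [cost, h]

variable [DecidableEq ι]

theorem eval_query (l : List ι) (k : (ι → Bool) → DTree ι)
    (hk : ∀ x y, (∀ i ∈ l, x i = y i) → k x = k y) (x : ι → Bool) :
    (query l k).eval x = (k x).eval x := by
  induction l generalizing k with
  | nil => rw [query, hk _ x (by simp)]
  | cons i l ih =>
    rw [query, eval_node_apply i fun b => query l fun v => k (Function.update v i b),
      ih _ (apply_update_congr hk _), Function.update_eq_self]

theorem cost_query (l : List ι) (k : (ι → Bool) → DTree ι)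
    (hk : ∀ x y, (∀ i ∈ l, x i = y i) → k x = k y) (x : ι → Bool) :
    (query l k).cost x = l.length + (k x).cost x := by
  induction l generalizing k with
  | nil => rw [query, hk _ x (by simp), List.length_nil, zero_add]
  | cons i l ih =>
    rw [query, cost_node_apply i fun b => query l fun v => k (Function.update v i b),
      ih _ (apply_update_congr hk _), Function.update_eq_self, List.length_cons]
    ring

end Query

end DTree

section Dquery

variable {ι : Type} {S : Set (ι → Bool)} {F : (ι → Bool) → Bool}

theorem Dquery_le_of_computes {T : DTree ι} {d : ℕ} (hT : Computes T S F)
    (hd : ∀ x ∈ S, T.cost x ≤ d) : Dquery S F ≤ d :=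
  Nat.sInf_le ⟨T, hT, hd⟩

theorem Dquery_le_of_adaptive (Q : Finset ι) (R : (ι → Bool) → Finset ι) {d : ℕ}
    (hR : ∀ x y, (∀ i ∈ Q, x i = y i) → R x = R y)
    (hF : ∀ x ∈ S, ∀ y ∈ S, (∀ i ∈ Q, x i = y i) → (∀ i ∈ R x, x i = y i) → F x = F y)
    (hd : ∀ x ∈ S, Q.card + (R x).card ≤ d) : Dquery S F ≤ d := by
  classical
  -- The leaf is labelled after both phases: `x` supplies the bits in `Q`, `y` those in `R x`.
  let answer (x y : ι → Bool) : Bool :=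
    decide (∃ z ∈ S, (∀ i ∈ Q, x i = z i) ∧ (∀ i ∈ R x, y i = z i) ∧ F z = true)
  let secondPhase (x : ι → Bool) : DTree ι := .query (R x).toList fun y => .leaf (answer x y)
  have answer_congr (x y y' : ι → Bool) (h : ∀ i ∈ (R x).toList, y i = y' i) :
      DTree.leaf (ι := ι) (answer x y) = .leaf (answer x y') := by
    simp +contextual only [answer, Finset.mem_toList.2, h]
  have secondPhase_congr (x x' : ι → Bool) (h : ∀ i ∈ Q.toList, x i = x' i) :
      secondPhase x = secondPhase x' := by
    simp only [Finset.mem_toList] at h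
    simp +contextual only [secondPhase, answer, hR x x' h, h]
  have answer_self {x : ι → Bool} (hx : x ∈ S) : answer x x = F x := by
    rw [Bool.eq_iff_iff, decide_eq_true_iff]
    constructor
    · rintro ⟨z, hz, hQ, hRx, hFz⟩
      rwa [hF x hx z hz hQ hRx]
    · exact fun h => ⟨x, hx, fun _ _ => rfl, fun _ _ => rfl, h⟩
  refine Dquery_le_of_computes (T := .query Q.toList secondPhase) (fun x hx => ?_) fun x hx => ?_
  · rw [DTree.eval_query _ _ secondPhase_congr, DTree.eval_query _ _ (answer_congr x), DTree.eval,
      answer_self hx]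
  · simpa only [DTree.cost_query _ _ secondPhase_congr, secondPhase,
      DTree.cost_query _ _ (answer_congr x), DTree.cost, Finset.length_toList, add_zero]
      using hd x hx

theorem Dquery_le_card (Q : Finset ι)
    (hF : ∀ x ∈ S, ∀ y ∈ S, (∀ i ∈ Q, x i = y i) → F x = F y) : Dquery S F ≤ Q.card :=
  Dquery_le_of_adaptive Q (fun _ => ∅) (fun _ _ _ => rfl)
    (fun x hx y hy hQ _ => hF x hx y hy hQ) (by simp)

theorem Dquery_eq_zero_of_subsingleton (hS : S.Subsingleton) : Dquery S F = 0 :=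
  Nat.le_zero.1 <| Dquery_le_card ∅ fun _ hx _ hy _ => congrArg F (hS hx hy)

end Dquery

section HamWeight

variable {ι κ : Type} [Fintype ι] [Fintype κ]

theorem hamWeight_eq_sum (x : ι → Bool) : hamWeight x = ∑ i, (x i).toNat := by
  rw [hamWeight, Finset.card_filter]
  exact Finset.sum_congr rfl fun i _ => by cases x i <;> rfl

theorem hamWeight_prod (z : ι × κ → Bool) :
    hamWeight z = ∑ i, hamWeight fun j => z (i, j) := by
  simp only [hamWeight_eq_sum, Fintype.sum_prod_type]

/-- The number of ones of `x` outside the coordinate `j₀`: the partial weight known once every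
coordinate but `j₀` has been queried. -/
def weightAway [DecidableEq ι] (j₀ : ι) (x : ι → Bool) : ℕ :=
  ∑ j ∈ {j₀}ᶜ, (x j).toNat

variable [DecidableEq ι]

theorem hamWeight_eq_add_weightAway (j₀ : ι) (x : ι → Bool) :
    hamWeight x = (x j₀).toNat + weightAway j₀ x := by
  rw [hamWeight_eq_sum, Fintype.sum_eq_add_sum_compl j₀, weightAway]

theorem weightAway_congr {j₀ : ι} {x y : ι → Bool} (h : ∀ j ≠ j₀, x j = y j) :
    weightAway j₀ x = weightAway j₀ y :=
  Finset.sum_congr rfl fun j hj => by rw [h j (by simpa using hj)]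

theorem weightAway_lt_card (j₀ : ι) (x : ι → Bool) : weightAway j₀ x < Fintype.card ι := by
  have hle : weightAway j₀ x ≤ ({j₀}ᶜ : Finset ι).card := by
    simpa [weightAway] using Finset.sum_le_card_nsmul {j₀}ᶜ _ 1 fun j _ => (x j).toNat_le
  exact hle.trans_lt (Finset.card_compl_lt_iff_nonempty _ |>.2 ⟨j₀, by simp⟩)

end HamWeight

namespace SymmFun

variable {ι : Type} [Fintype ι]

theorem exists_eq_apply_hamWeight {g : (ι → Bool) → Bool} (hg : SymmFun g) :
    ∃ G : ℕ → Bool, ∀ x, g x = G (hamWeight x) := by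
  obtain ⟨G, hG⟩ := (Function.factorsThrough_iff g).1 fun x y h => hg x y h
  exact ⟨G, congrFun hG⟩

theorem exists_slope {g : (ι → Bool) → Bool} (hg : SymmFun g) (a : ℕ) :
    ∃ c : ℤ, ∀ x y, (hamWeight x = a ∨ hamWeight x = a + 1) →
      (hamWeight y = a ∨ hamWeight y = a + 1) →
      ((g x).toNat - (g y).toNat : ℤ) = c * (hamWeight x - hamWeight y) := by
  obtain ⟨G, hG⟩ := hg.exists_eq_apply_hamWeight
  refine ⟨(G (a + 1)).toNat - (G a).toNat, fun x y hx hy => ?_⟩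
  rw [hG, hG]
  rcases hx with hx | hx <;> rcases hy with hy | hy <;> simp [hx, hy]

end SymmFun

section BlockComp

variable {ι κ : Type}

/-- The composition `f ∘ g` of Boolean functions on disjoint blocks; coordinate `(i, j)` is the
`j`-th bit of block `i`. -/
def blockComp (f : (ι → Bool) → Bool) (g : (κ → Bool) → Bool) (z : ι × κ → Bool) : Bool :=
  f fun i => g fun j => z (i, j)

variable [Fintype ι] [Fintype κ] {f : (ι → Bool) → Bool} {g : (κ → Bool) → Bool}

theorem hamWeight_block_eq_of_forall_ne {x y : ι × κ → Bool} (hxy : hamWeight x = hamWeight y)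
    {i₀ : ι} (h : ∀ i ≠ i₀, ∀ j, x (i, j) = y (i, j)) :
    hamWeight (fun j => x (i₀, j)) = hamWeight fun j => y (i₀, j) := by
  classical
  have hrest : ∑ i ∈ {i₀}ᶜ, hamWeight (fun j => x (i, j)) =
      ∑ i ∈ {i₀}ᶜ, hamWeight fun j => y (i, j) :=
    Finset.sum_congr rfl fun i hi => by simp only [h i (by simpa using hi)]
  rw [hamWeight_prod, hamWeight_prod, Fintype.sum_eq_add_sum_compl i₀,
    Fintype.sum_eq_add_sum_compl i₀, hrest] at hxy
  exact add_right_cancel hxy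

theorem blockComp_eq_of_forall_ne (hg : SymmFun g) {x y : ι × κ → Bool}
    (hxy : hamWeight x = hamWeight y) {i₀ : ι} (h : ∀ i ≠ i₀, ∀ j, x (i, j) = y (i, j)) :
    blockComp f g x = blockComp f g y := by
  refine congrArg f (funext fun i => ?_)
  by_cases hi : i = i₀
  · subst hi
    exact hg _ _ (hamWeight_block_eq_of_forall_ne hxy h)
  · simp only [h i hi]

theorem blockComp_eq_of_consecutive_weights (hf : SymmFun f) (hg : SymmFun g)
    {x y : ι × κ → Bool} (hxy : hamWeight x = hamWeight y) (a : ℕ)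
    (h : ∀ i, hamWeight (fun j => x (i, j)) = hamWeight (fun j => y (i, j)) ∨
      (hamWeight (fun j => x (i, j)) = a ∨ hamWeight (fun j => x (i, j)) = a + 1) ∧
      (hamWeight (fun j => y (i, j)) = a ∨ hamWeight (fun j => y (i, j)) = a + 1)) :
    blockComp f g x = blockComp f g y := by
  obtain ⟨c, hc⟩ := hg.exists_slope a
  have hblock (i : ι) : ((g fun j => x (i, j)).toNat - (g fun j => y (i, j)).toNat : ℤ) =
      c * (hamWeight (fun j => x (i, j)) - hamWeight fun j => y (i, j)) := by
    rcases h i with heq | ⟨hx, hy⟩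
    · simp [hg _ _ heq, heq]
    · exact hc _ _ hx hy
  have hsum : ((hamWeight fun i => g fun j => x (i, j)) -
      (hamWeight fun i => g fun j => y (i, j)) : ℤ) = 0 := by
    calc ((hamWeight fun i => g fun j => x (i, j)) -
          (hamWeight fun i => g fun j => y (i, j)) : ℤ)
        = ∑ i, ((g fun j => x (i, j)).toNat - (g fun j => y (i, j)).toNat : ℤ) := by
          simp [hamWeight_eq_sum]
      _ = c * (hamWeight x - hamWeight y) := by
          rw [hamWeight_prod x, hamWeight_prod y]
          push_cast
          rw [Finset.sum_congr rfl fun i _ => hblock i, ← Finset.mul_sum, Finset.sum_sub_distrib]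
      _ = 0 := by simp [hxy]
  exact hf _ _ (by exact_mod_cast sub_eq_zero.1 hsum)

theorem blockComp_eq_of_forall_weightAway_ne (hf : SymmFun f) (hg : SymmFun g) [DecidableEq κ]
    {x y : ι × κ → Bool} (hxy : hamWeight x = hamWeight y) (j₀ : κ) (a : ℕ)
    (haway : ∀ i, ∀ j ≠ j₀, x (i, j) = y (i, j))
    (hat : ∀ i, weightAway j₀ (fun j => x (i, j)) ≠ a → x (i, j₀) = y (i, j₀)) :
    blockComp f g x = blockComp f g y := by
  refine blockComp_eq_of_consecutive_weights hf hg hxy a fun i => ?_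
  simp only [hamWeight_eq_add_weightAway j₀, ← weightAway_congr (haway i)]
  by_cases hi : weightAway j₀ (fun j => x (i, j)) = a
  · right
    have hx := (x (i, j₀)).toNat_le
    have hy := (y (i, j₀)).toNat_le
    omega
  · exact .inl (by rw [hat i hi])

end BlockComp

theorem exists_ceilDiv_le_card_fiber {α β : Type*} [DecidableEq β] {s : Finset α} {t : Finset β}
    {p : α → β} (hp : ∀ a ∈ s, p a ∈ t) (ht : t.Nonempty) :
    ∃ b ∈ t, s.card ⌈/⌉ t.card ≤ (s.filter fun a => p a = b).card := by
  obtain ⟨b, hb, hmax⟩ := t.exists_max_image (fun b => (s.filter fun a => p a = b).card) ht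
  refine ⟨b, hb, (ceilDiv_le_iff_le_mul ht.card_pos).2 ?_⟩
  rw [mul_comm]
  exact Finset.card_le_mul_card_image_of_maps_to hp _ hmax

section QueryBounds

variable {ι κ : Type} [Fintype ι] [Fintype κ] (f : (ι → Bool) → Bool) {g : (κ → Bool) → Bool}

theorem Dquery_blockComp_le_sub_one_mul (hg : SymmFun g) (w : ℕ) :
    Dquery (cubeSlice (ι × κ) w) (blockComp f g) ≤
      (Fintype.card ι - 1) * Fintype.card κ := by
  classical
  obtain hι | ⟨⟨i₀⟩⟩ := isEmpty_or_nonempty ι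
  · simp [Dquery_eq_zero_of_subsingleton Set.subsingleton_of_subsingleton]
  calc Dquery (cubeSlice (ι × κ) w) (blockComp f g)
      ≤ (({i₀}ᶜ : Finset ι) ×ˢ (Finset.univ : Finset κ)).card := by
        refine Dquery_le_card _ fun x hx y hy hQ => ?_
        exact blockComp_eq_of_forall_ne hg (hx.trans hy.symm)
          fun i hi j => hQ (i, j) (by simpa using hi)
    _ = (Fintype.card ι - 1) * Fintype.card κ := by
        simp [Finset.card_product, Finset.card_compl]

variable {f}

theorem Dquery_blockComp_le_sub_ceilDiv (hf : SymmFun f) (hg : SymmFun g) (w : ℕ) :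
    Dquery (cubeSlice (ι × κ) w) (blockComp f g) ≤
      Fintype.card ι * Fintype.card κ - Fintype.card ι ⌈/⌉ Fintype.card κ := by
  classical
  obtain hκ | hκ := isEmpty_or_nonempty κ
  · simp [Dquery_eq_zero_of_subsingleton Set.subsingleton_of_subsingleton]
  choose! popular hpopular using fun (q : ι → ℕ) (hq : ∀ i, q i < Fintype.card κ) =>
    exists_ceilDiv_le_card_fiber (s := Finset.univ) (fun i _ => Finset.mem_range.2 (hq i))
      ⟨0, Finset.mem_range.2 Fintype.card_pos⟩
  let j₀ : κ := Classical.arbitrary κ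
  let p (z : ι × κ → Bool) (i : ι) : ℕ := weightAway j₀ fun j => z (i, j)
  let Q : Finset (ι × κ) := Finset.univ ×ˢ {j₀}ᶜ
  let R (z : ι × κ → Bool) : Finset (ι × κ) :=
    (Finset.univ.filter fun i => p z i ≠ popular (p z)) ×ˢ {j₀}
  have eq_away {x y : ι × κ → Bool} (h : ∀ q ∈ Q, x q = y q) (i : ι) (j : κ) (hj : j ≠ j₀) :
      x (i, j) = y (i, j) := h (i, j) (by simpa [Q] using hj)
  refine Dquery_le_of_adaptive Q R (fun x y hQ => ?_) (fun x hx y hy hQ hRx => ?_) fun x _ => ?_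
  · have hp : p x = p y := funext fun i => weightAway_congr (eq_away hQ i)
    simp only [R, hp]
  · exact blockComp_eq_of_forall_weightAway_ne hf hg (hx.trans hy.symm) j₀ (popular (p x))
      (eq_away hQ) fun i hi => hRx (i, j₀) (by simpa [R] using hi)
  · have hpop := (hpopular (p x) fun i => weightAway_lt_card j₀ _).2
    have hsplit := Finset.card_filter_add_card_filter_not (s := Finset.univ)
      fun i => p x i = popular (p x)
    have hle : Fintype.card ι ≤ Fintype.card ι * Fintype.card κ :=
      Nat.le_mul_of_pos_right _ Fintype.card_pos
    simp only [Q, R, Finset.card_product, Finset.card_compl, Finset.card_singleton,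
      Finset.card_univ, Finset.card_range, Nat.mul_sub_one, mul_one, ne_eq] at hpop hsplit ⊢
    omega

end QueryBounds

theorem natCast_rpow_one_third_le_iff {N k : ℕ} : (N : ℝ) ^ ((1 : ℝ) / 3) ≤ k ↔ N ≤ k ^ 3 := by
  rw [one_div, Real.rpow_inv_le_iff_of_pos (by positivity) (by positivity) (by norm_num),
    Real.rpow_ofNat]
  exact_mod_cast Iff.rfl

theorem natCast_sub_le_sub_rpow_one_third {N k : ℕ} (h : N ≤ k ^ 3) :
    ((N - k : ℕ) : ℝ) ≤ N - (N : ℝ) ^ ((1 : ℝ) / 3) := by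
  obtain hk | hN := le_total k N
  · rw [Nat.cast_sub hk]
    exact sub_le_sub_left (natCast_rpow_one_third_le_iff.2 h) _
  · rw [Nat.sub_eq_zero_of_le hN, Nat.cast_zero, sub_nonneg]
    exact natCast_rpow_one_third_le_iff.2 (Nat.le_self_pow three_ne_zero N)

theorem mul_le_max_ceilDiv_pow_three (n m : ℕ) : n * m ≤ max m (n ⌈/⌉ m) ^ 3 := by
  obtain rfl | hm := m.eq_zero_or_pos
  · simp
  calc n * m ≤ m * (n ⌈/⌉ m) * m := Nat.mul_le_mul_right _ (le_smul_ceilDiv hm)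
    _ ≤ max m (n ⌈/⌉ m) * max m (n ⌈/⌉ m) * max m (n ⌈/⌉ m) := by gcongr <;> simp
    _ = max m (n ⌈/⌉ m) ^ 3 := by ring

theorem stmt17_general {ι κ : Type} [Fintype ι] [Fintype κ] {f : (ι → Bool) → Bool}
    {g : (κ → Bool) → Bool} (hf : SymmFun f) (hg : SymmFun g) (w : ℕ) :
    Dquery (cubeSlice (ι × κ) w) (blockComp f g) ≤
        min ((Fintype.card ι - 1) * Fintype.card κ)
          (Fintype.card ι * Fintype.card κ - Fintype.card ι ⌈/⌉ Fintype.card κ) ∧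
      (Dquery (cubeSlice (ι × κ) w) (blockComp f g) : ℝ) ≤
        ((Fintype.card ι * Fintype.card κ : ℕ) : ℝ) -
          ((Fintype.card ι * Fintype.card κ : ℕ) : ℝ) ^ ((1 : ℝ) / 3) := by
  have hmin := le_min (Dquery_blockComp_le_sub_one_mul f hg w)
    (Dquery_blockComp_le_sub_ceilDiv hf hg w)
  refine ⟨hmin, ?_⟩
  have hmax : Dquery (cubeSlice (ι × κ) w) (blockComp f g) ≤ Fintype.card ι * Fintype.card κ -
      max (Fintype.card κ) (Fintype.card ι ⌈/⌉ Fintype.card κ) := by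
    rw [Nat.sub_one_mul] at hmin
    omega
  exact (Nat.cast_le.2 hmax).trans
    (natCast_sub_le_sub_rpow_one_third (mul_le_max_ceilDiv_pow_three _ _))

/-- For symmetric `f : {0,1}^n → {0,1}` and `g : {0,1}^m → {0,1}` and any slice of
`{0,1}^{nm}` (coordinates indexed by `Fin n × Fin m`, block `i` being `{i} × Fin m`),
`D(f ∘ g) ≤ min{(n-1)m, nm - ⌈n/m⌉}`, and consequently `D(f ∘ g) ≤ N - N^{1/3}` where
`N = nm`. -/
theorem stmt17 (n m : ℕ) (f : (Fin n → Bool) → Bool) (g : (Fin m → Bool) → Bool)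
    (hf : SymmFun f) (hg : SymmFun g) (w : ℕ) (hw : w ≤ n * m) :
    Dquery (cubeSlice (Fin n × Fin m) w) (fun z => f fun i => g fun j => z (i, j)) ≤
        min ((n - 1) * m) (n * m - (n + m - 1) / m) ∧
      (Dquery (cubeSlice (Fin n × Fin m) w) (fun z => f fun i => g fun j => z (i, j)) : ℝ) ≤
        ((n * m : ℕ) : ℝ) - ((n * m : ℕ) : ℝ) ^ ((1 : ℝ) / 3) := by
  have h := stmt17_general hf hg w
  rwa [Fintype.card_fin, Fintype.card_fin, Nat.ceilDiv_eq_add_pred_div] at h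
end

section
/- For every Boolean function g : {0,1}^n → {0,1}, the lifted function f_g on the balanced slice of {0,1}^{2n}, defined by f_g(x,y) = g(x) for all (x,y) with x, y ∈ {0,1}^n and |x| + |y| = n, satisfies D(f_g) = D(g). -/
/-!
A tree for `g` computes the lift by querying only the left half. Conversely, the balanced slice
contains every `(x, ¬x)`, and a tree for the lift can be run on `(x, ¬x)` with one query to `x` per
query it makes. Both simulations substitute literals for variables, so neither changes the cost.
-/

/-- A variable or its negation, the building block for substitutions between Boolean cubes. -/
structure Literal (ι : Type) where
  var : ι
  negated : Bool

/-- The truth value of a literal under the assignment `x`. -/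
def Literal.eval {ι : Type} (l : Literal ι) (x : ι → Bool) : Bool :=
  l.negated ^^ x l.var

/-- The map of Boolean cubes whose coordinates are the literals `σ j`. -/
def literalMap {ι κ : Type} (σ : κ → Literal ι) (x : ι → Bool) (j : κ) : Bool :=
  (σ j).eval x

/-- Substitution of literals for the variables of a decision tree. A negated literal is queried
through its variable, with the two subtrees exchanged. -/
def DTree.subst {ι κ : Type} (σ : κ → Literal ι) : DTree κ → DTree ι
  | .leaf b => .leaf b
  | .node j t₀ t₁ =>
    if (σ j).negated then .node (σ j).var (t₁.subst σ) (t₀.subst σ)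
    else .node (σ j).var (t₀.subst σ) (t₁.subst σ)

/-- `QueryBound S f d` says that some decision tree computes `f` on `S` with at most `d` queries on
every input in `S`; `Dquery S f` is the least such `d`. -/
def QueryBound {ι : Type} (S : Set (ι → Bool)) (f : (ι → Bool) → Bool) (d : ℕ) : Prop :=
  ∃ T : DTree ι, Computes T S f ∧ ∀ x ∈ S, T.cost x ≤ d

section Substitution

variable {ι κ : Type} {S : Set (ι → Bool)} {S' : Set (κ → Bool)}
  {f : (ι → Bool) → Bool} {f' : (κ → Bool) → Bool}

theorem DTree.eval_subst (σ : κ → Literal ι) (T : DTree κ) (x : ι → Bool) :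
    (T.subst σ).eval x = T.eval (literalMap σ x) := by
  induction T with
  | leaf b => rfl
  | node j t₀ t₁ ih₀ ih₁ =>
    cases hneg : (σ j).negated <;> cases hx : x (σ j).var <;>
      simp [DTree.subst, DTree.eval, literalMap, Literal.eval, hneg, hx, ih₀, ih₁]

theorem DTree.cost_subst (σ : κ → Literal ι) (T : DTree κ) (x : ι → Bool) :
    (T.subst σ).cost x = T.cost (literalMap σ x) := by
  induction T with
  | leaf b => rfl
  | node j t₀ t₁ ih₀ ih₁ =>
    cases hneg : (σ j).negated <;> cases hx : x (σ j).var <;>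
      simp [DTree.subst, DTree.cost, literalMap, Literal.eval, hneg, hx, ih₀, ih₁]

theorem QueryBound.of_literalMap {d : ℕ} (h : QueryBound S' f' d) (σ : κ → Literal ι)
    (hσ : Set.MapsTo (literalMap σ) S S') (hf : Set.EqOn (f' ∘ literalMap σ) f S) :
    QueryBound S f d := by
  obtain ⟨T, hT, hcost⟩ := h
  refine ⟨T.subst σ, fun x hx => ?_, fun x hx => ?_⟩
  · calc (T.subst σ).eval x = T.eval (literalMap σ x) := T.eval_subst σ x
      _ = f' (literalMap σ x) := hT _ (hσ hx)
      _ = f x := hf hx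
  · calc (T.subst σ).cost x = T.cost (literalMap σ x) := T.cost_subst σ x
      _ ≤ d := hcost _ (hσ hx)

theorem Dquery_eq_of_literalMap (σ : κ → Literal ι) (τ : ι → Literal κ)
    (hσ : Set.MapsTo (literalMap σ) S S') (hf : Set.EqOn (f' ∘ literalMap σ) f S)
    (hτ : Set.MapsTo (literalMap τ) S' S) (hf' : Set.EqOn (f ∘ literalMap τ) f' S') :
    Dquery S f = Dquery S' f' := by
  have hbound (d : ℕ) : QueryBound S f d ↔ QueryBound S' f' d :=
    ⟨fun h => h.of_literalMap τ hτ hf', fun h => h.of_literalMap σ hσ hf⟩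
  exact congrArg sInf (Set.ext hbound)

end Substitution

section HammingWeight

variable {ι κ : Type} [Fintype ι] [Fintype κ]

theorem hamWeight_sumElim (x : ι → Bool) (y : κ → Bool) :
    hamWeight (Sum.elim x y) = hamWeight x + hamWeight y := by
  simp only [hamWeight, Finset.card_filter]
  exact Fintype.sum_sum_type _

theorem hamWeight_add_hamWeight_not (x : ι → Bool) :
    hamWeight x + hamWeight (fun i => !x i) = Fintype.card ι := by
  simpa only [hamWeight, Bool.not_eq_true', Bool.not_eq_true, Finset.card_univ] using
    Finset.card_filter_add_card_filter_not (s := Finset.univ) (fun i => x i = true)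

theorem sumElim_not_mem_cubeSlice (x : ι → Bool) :
    Sum.elim x (fun i => !x i) ∈ cubeSlice (ι ⊕ ι) (Fintype.card ι) :=
  (hamWeight_sumElim x _).trans (hamWeight_add_hamWeight_not x)

end HammingWeight

theorem stmt18_general {ι : Type} {S : Set (ι ⊕ ι → Bool)}
    (hS : ∀ x : ι → Bool, Sum.elim x (fun i => !x i) ∈ S) (g : (ι → Bool) → Bool) :
    Dquery S (fun z => g fun i => z (Sum.inl i)) = Dquery Set.univ g := by
  let proj (i : ι) : Literal (ι ⊕ ι) := ⟨Sum.inl i, false⟩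
  let pair : ι ⊕ ι → Literal ι := Sum.elim (⟨·, false⟩) (⟨·, true⟩)
  have literalMap_proj (z : ι ⊕ ι → Bool) : literalMap proj z = fun i => z (Sum.inl i) := by
    funext i
    exact Bool.false_xor _
  have literalMap_pair (x : ι → Bool) : literalMap pair x = Sum.elim x (fun i => !x i) := by
    funext j
    rcases j with i | i
    · exact Bool.false_xor _
    · exact Bool.true_xor _
  refine Dquery_eq_of_literalMap proj pair (Set.mapsTo_univ _ _) (fun z _ => ?_)
    (fun x _ => ?_) (fun x _ => ?_)
  · exact congrArg g (literalMap_proj z)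
  · rw [literalMap_pair]
    exact hS x
  · exact congrArg g (funext fun i => congrFun (literalMap_pair x) (Sum.inl i))

/-- For every `g : {0,1}^n → {0,1}`, the lifted function `f_g(x,y) = g(x)` on the balanced
slice of `{0,1}^{2n}` (coordinates indexed by `Fin n ⊕ Fin n`, the left summand carrying
`x` and the right carrying `y`) satisfies `D(f_g) = D(g)`. -/
theorem stmt18 (n : ℕ) (g : (Fin n → Bool) → Bool) :
    Dquery (cubeSlice (Fin n ⊕ Fin n) n) (fun z => g fun i => z (Sum.inl i)) =
      Dquery (Set.univ : Set ((Fin n → Bool))) g := by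
  refine stmt18_general (fun x => ?_) g
  simpa only [Fintype.card_fin] using sumElim_not_mem_cubeSlice x
end

section
/- There exists a Boolean function f on the balanced slice of {0,1}^n (for infinitely many n, namely n a perfect square with √n even) with bs(f) ≥ s(f)²/16; specifically, the restriction to the balanced slice of the Rubinstein function (the OR of √n copies of the indicator, on 2k = √n bits, of strings of the form (00)^i 11 (00)^{k−i−1}) has bs(f) ≥ n/4 and s(f) ≤ 2√n. -/
/-- Flip the bits of `x` at the positions in `B`. -/
def flipOn {ι : Type} [DecidableEq ι] (x : ι → Bool) (B : Finset ι) : ι → Bool :=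
  fun i => if i ∈ B then !(x i) else x i

/-- `B` is a sensitive block of `x` for `f` on the domain `S`: flipping `x` on `B` stays in
the domain and changes the value of `f`. -/
def SensBlock {ι : Type} [DecidableEq ι] (S : Set (ι → Bool)) (f : (ι → Bool) → Bool)
    (x : ι → Bool) (B : Finset ι) : Prop :=
  flipOn x B ∈ S ∧ f (flipOn x B) ≠ f x

/-- Block sensitivity of `f` at `x`: the maximum number of pairwise disjoint sensitive
blocks of `x`. -/
noncomputable def bsAt {ι : Type} [DecidableEq ι] (S : Set (ι → Bool))
    (f : (ι → Bool) → Bool) (x : ι → Bool) : ℕ :=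
  sSup {m | ∃ 𝓑 : Finset (Finset ι), (∀ B ∈ 𝓑, SensBlock S f x B) ∧
    (𝓑 : Set (Finset ι)).Pairwise (fun A B => Disjoint A B) ∧ 𝓑.card = m}

/-- Block sensitivity of `f` on the domain `S`. -/
noncomputable def bsM {ι : Type} [DecidableEq ι] (S : Set (ι → Bool))
    (f : (ι → Bool) → Bool) : ℕ :=
  sSup {m | ∃ x ∈ S, bsAt S f x = m}

/-- Sensitivity (for slice functions) of `f` at `x`: the maximum number of pairwise
disjoint sensitive blocks of `x` of size exactly `2`. -/
noncomputable def sAt {ι : Type} [DecidableEq ι] (S : Set (ι → Bool))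
    (f : (ι → Bool) → Bool) (x : ι → Bool) : ℕ :=
  sSup {m | ∃ 𝓑 : Finset (Finset ι), (∀ B ∈ 𝓑, SensBlock S f x B ∧ B.card = 2) ∧
    (𝓑 : Set (Finset ι)).Pairwise (fun A B => Disjoint A B) ∧ 𝓑.card = m}

/-- Sensitivity of `f` on the domain `S`. -/
noncomputable def sM {ι : Type} [DecidableEq ι] (S : Set (ι → Bool))
    (f : (ι → Bool) → Bool) : ℕ :=
  sSup {m | ∃ x ∈ S, sAt S f x = m}

/-- The Rubinstein function on `n = (2k)²` bits: the input is split into `2k` blocks of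
`2k` bits (coordinates indexed by `Fin (2k) × Fin (2k)`), and the output is `1` iff some
block is of the form `(00)^i 11 (00)^{k-i-1}`. -/
def rub (k : ℕ) (x : (Fin (2 * k) × Fin (2 * k)) → Bool) : Bool :=
  decide (∃ j : Fin (2 * k), ∃ i : Fin k, ∀ t : Fin (2 * k),
    x (j, t) = true ↔ (t.1 = 2 * i.1 ∨ t.1 = 2 * i.1 + 1))

/-!
On the zero side, a sensitive block `B` of size two turns some row `O` of the input into a pattern
`T` by removing at most one `1` and adding at most one `1`. Since the patterns are disjoint pairs,
two of them can be that close to `O` only if `|O| = 2`. So at most two points of each row are needed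
to meet all such `B`, namely `O` itself if `|O| = 2`, and `O ∆ T` for the only close pattern `T`
otherwise. On the one side, every sensitive block meets the row carrying a pattern.

For block sensitivity, fill half of the rows with `1` and the mirrored half with `0`. Flipping a
pattern in an empty row together with the same positions of its mirror row keeps the weight, and
these blocks are disjoint.
-/

section Sensitivity

open Finset Function

variable {ι : Type} [DecidableEq ι] {S : Set (ι → Bool)} {f : (ι → Bool) → Bool} {x : ι → Bool}

theorem sAt_le_card_of_not_disjoint (U : Finset ι)
    (hU : ∀ B, SensBlock S f x B → #B = 2 → ¬Disjoint U B) : sAt S f x ≤ #U := by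
  refine csSup_le' ?_
  rintro _ ⟨𝓑, hsens, hdisj, rfl⟩
  have hmeets : ∀ B ∈ 𝓑, (U ∩ B).Nonempty := fun B hB =>
    not_disjoint_iff_nonempty_inter.1 (hU B (hsens B hB).1 (hsens B hB).2)
  have hdisj' : (𝓑 : Set (Finset ι)).PairwiseDisjoint (U ∩ ·) := fun A hA B hB hAB =>
    (hdisj hA hB hAB).mono inter_subset_right inter_subset_right
  calc #𝓑 ≤ #(𝓑.biUnion (U ∩ ·)) := card_le_card_biUnion hdisj' hmeets
    _ ≤ #U := card_le_card (biUnion_subset.2 fun _ _ => inter_subset_left)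

theorem SensBlock.nonempty {B : Finset ι} (hB : SensBlock S f x B) : B.Nonempty := by
  rw [nonempty_iff_ne_empty]
  rintro rfl
  exact hB.2 (congrArg f (by ext; simp [flipOn]))

theorem card_le_bsM [Finite ι] {κ : Type*} [Fintype κ] (hx : x ∈ S) (B : κ → Finset ι)
    (hsens : ∀ i, SensBlock S f x (B i)) (hdisj : Pairwise (Disjoint on B)) :
    Fintype.card κ ≤ bsM S f := by
  have := Fintype.ofFinite ι
  have hinj : Injective B := by
    refine injective_iff_pairwise_ne.2 (hdisj.mono fun i j hij => ?_)
    exact hij.ne (hsens i).nonempty.ne_empty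
  have hbsAt : Fintype.card κ ≤ bsAt S f x := by
    refine le_csSup ⟨Fintype.card (Finset ι), ?_⟩ ⟨univ.map ⟨B, hinj⟩, ?_, ?_, by simp⟩
    · rintro _ ⟨𝓑, -, -, rfl⟩
      exact card_le_univ 𝓑
    · simpa using hsens
    · simpa using hdisj.range_pairwise
  exact hbsAt.trans (le_csSup (S.toFinite.image (bsAt S f)).bddAbove ⟨x, hx, rfl⟩)

end Sensitivity

section Ones

open Finset
open scoped symmDiff

variable {ι : Type} [Fintype ι]

/-- The support of a Boolean input, i.e. the set of positions carrying a `1`. It translates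
statements about inputs and bit flips into statements about finite sets. -/
def ones (x : ι → Bool) : Finset ι := {i | x i = true}

@[simp]
theorem mem_ones {x : ι → Bool} {i : ι} : i ∈ ones x ↔ x i = true := by simp [ones]

theorem ones_symmDiff_ones_flipOn [DecidableEq ι] (x : ι → Bool) (B : Finset ι) :
    ones x ∆ ones (flipOn x B) = B := by
  ext i
  by_cases hi : i ∈ B <;> cases hxi : x i <;> simp [mem_symmDiff, flipOn, hi, hxi]

theorem two_mul_card_ones_sdiff_ones [DecidableEq ι] {x y : ι → Bool}
    (h : hamWeight x = hamWeight y) : 2 * #(ones x \ ones y) = #(ones x ∆ ones y) := by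
  have hcomm : #(ones x \ ones y) = #(ones y \ ones x) := card_sdiff_comm h
  rw [symmDiff_def, sup_eq_union, card_union_of_disjoint disjoint_sdiff_sdiff, ← hcomm, two_mul]

theorem two_mul_hamWeight_of_perm_eq_not {x : ι → Bool} (σ : Equiv.Perm ι)
    (hσ : ∀ i, x (σ i) = !x i) : 2 * hamWeight x = Fintype.card ι := by
  have hcard : hamWeight x = #{i | ¬x i = true} := card_equiv σ (by simp [hσ])
  rw [two_mul, ← card_univ, ← card_filter_add_card_filter_not (fun i => x i = true), ← hcard]
  rfl

end Ones

section CloseSets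

open Finset Function
open scoped symmDiff

variable {α κ : Type*} [DecidableEq α]

theorem card_eq_two_of_card_sdiff_le_one {O T T' : Finset α} (hdisj : Disjoint T T')
    (hT : #T = 2) (hT' : #T' = 2) (hOT : #(O \ T) ≤ 1) (hTO : #(T \ O) ≤ 1)
    (hOT' : #(O \ T') ≤ 1) (hTO' : #(T' \ O) ≤ 1) : #O = 2 := by
  have hsub : O ∩ T ⊆ O \ T' := fun a ha =>
    mem_sdiff.2 ⟨(mem_inter.1 ha).1, disjoint_left.1 hdisj (mem_inter.1 ha).2⟩
  have hsub' : O ∩ T' ⊆ O \ T := fun a ha =>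
    mem_sdiff.2 ⟨(mem_inter.1 ha).1, disjoint_right.1 hdisj (mem_inter.1 ha).2⟩
  have hle := card_le_card hsub
  have hle' := card_le_card hsub'
  have hO := card_sdiff_add_card_inter O T
  have hTsplit := card_sdiff_add_card_inter T O
  have hTsplit' := card_sdiff_add_card_inter T' O
  rw [inter_comm] at hTsplit hTsplit'
  omega

theorem exists_card_le_two_not_disjoint_symmDiff {T : κ → Finset α}
    (hdisj : Pairwise (Disjoint on T)) (hcard : ∀ i, #(T i) = 2) {O : Finset α}
    (hO : ∀ i, O ≠ T i) :
    ∃ P : Finset α, #P ≤ 2 ∧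
      ∀ i, #(O \ T i) ≤ 1 → #(T i \ O) ≤ 1 → ¬Disjoint P (O ∆ T i) := by
  let close : Set κ := {i | #(O \ T i) ≤ 1 ∧ #(T i \ O) ≤ 1}
  rcases close.subsingleton_or_nontrivial with hsub | ⟨i, hi, i', hi', hne⟩
  · rcases hsub.eq_empty_or_singleton with hempty | ⟨i₀, hsingle⟩
    · have hnone := Set.eq_empty_iff_forall_notMem.1 hempty
      exact ⟨∅, by simp, fun i hOT hTO => (hnone i ⟨hOT, hTO⟩).elim⟩
    · have hi₀ : i₀ ∈ close := by simp [hsingle]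
      refine ⟨O ∆ T i₀, ?_, fun i hOT hTO => ?_⟩
      · exact (card_union_le _ _).trans (add_le_add hi₀.1 hi₀.2)
      · obtain rfl : i = i₀ := hsub ⟨hOT, hTO⟩ hi₀
        rw [disjoint_self]
        exact mt symmDiff_eq_bot.1 (hO i)
  · have hO2 : #O = 2 := card_eq_two_of_card_sdiff_le_one (hdisj hne) (hcard i) (hcard i')
      hi.1 hi.2 hi'.1 hi'.2
    refine ⟨O, hO2.le, fun j _ _ hdisjO => hO j ?_⟩
    have hsub : O ⊆ T j := by
      rw [← sdiff_eq_empty_iff_subset, ← disjoint_self_iff_empty]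
      exact hdisjO.mono sdiff_subset subset_union_left
    exact eq_of_subset_of_card_le hsub (by rw [hcard, hO2])

end CloseSets

section RowSection

open Finset
open scoped symmDiff

variable {α β : Type*}

/-- The `j`-th row `{t | (j, t) ∈ A}` of a finite set of cells, used to read off the content of one
block of an input. -/
noncomputable def rowSection (A : Finset (α × β)) (j : α) : Finset β :=
  A.preimage (Prod.mk j) (Prod.mk_right_injective j).injOn

@[simp]
theorem mem_rowSection {A : Finset (α × β)} {j : α} {t : β} : t ∈ rowSection A j ↔ (j, t) ∈ A := by
  simp [rowSection]

theorem card_rowSection_le (A : Finset (α × β)) (j : α) : #(rowSection A j) ≤ #A :=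
  card_le_card_of_injOn (Prod.mk j) (fun _ ht => mem_rowSection.1 ht)
    (Prod.mk_right_injective j).injOn

theorem rowSection_product_of_mem {A : Finset α} {j : α} (hj : j ∈ A) (T : Finset β) :
    rowSection (A ×ˢ T) j = T := by
  ext; simp [hj]

variable [DecidableEq α] [DecidableEq β]

theorem rowSection_sdiff (A B : Finset (α × β)) (j : α) :
    rowSection (A \ B) j = rowSection A j \ rowSection B j := by
  ext; simp

theorem rowSection_symmDiff (A B : Finset (α × β)) (j : α) :
    rowSection (A ∆ B) j = rowSection A j ∆ rowSection B j := by
  ext; simp [mem_symmDiff]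

end RowSection

section RowOr

open Finset Function
open scoped symmDiff

variable {α β : Type} [Fintype α] [Fintype β] {κ : Type*} {T : κ → Finset β}

/-- `f` is the OR, over the rows of the input, of the indicator of the strings with support in the
family `T`. This is the shape of the Rubinstein function, whose patterns are disjoint pairs. -/
def IsRowOr (T : κ → Finset β) (f : (α × β → Bool) → Bool) : Prop :=
  ∀ x, f x = true ↔ ∃ j i, rowSection (ones x) j = T i

variable {f : (α × β → Bool) → Bool} {x : α × β → Bool} [DecidableEq α] [DecidableEq β]

theorem rowSection_ones_flipOn (x : α × β → Bool) (B : Finset (α × β)) (j : α) :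
    rowSection (ones (flipOn x B)) j = rowSection (ones x) j ∆ rowSection B j := by
  rw [← congrArg (rowSection · j) (ones_symmDiff_ones_flipOn x B), rowSection_symmDiff,
    symmDiff_symmDiff_cancel_left]

theorem IsRowOr.sAt_le_of_eq_true (hf : IsRowOr T f) (S : Set (α × β → Bool)) (hx : f x = true) :
    sAt S f x ≤ Fintype.card β := by
  obtain ⟨j, i, hji⟩ := (hf x).1 hx
  refine (sAt_le_card_of_not_disjoint ({j} ×ˢ univ) fun B hB _ hdisj => hB.2 ?_).trans_eq (by simp)
  have hrow : rowSection B j = ∅ :=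
    eq_empty_of_forall_notMem fun t ht => disjoint_left.1 hdisj (by simp) (mem_rowSection.1 ht)
  rw [hx, hf]
  refine ⟨j, i, ?_⟩
  rw [rowSection_ones_flipOn, hrow, ← hji]
  exact symmDiff_bot _

theorem IsRowOr.sAt_le_of_eq_false (hf : IsRowOr T f) (hdisj : Pairwise (Disjoint on T))
    (hcard : ∀ i, #(T i) = 2) {w : ℕ} (hxw : x ∈ cubeSlice (α × β) w) (hx : f x = false) :
    sAt (cubeSlice (α × β) w) f x ≤ Fintype.card α * 2 := by
  have hrow : ∀ j i, rowSection (ones x) j ≠ T i := fun j i hji => by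
    simp [(hf x).2 ⟨j, i, hji⟩] at hx
  choose P hPcard hP using fun j => exists_card_le_two_not_disjoint_symmDiff hdisj hcard (hrow j)
  refine (sAt_le_card_of_not_disjoint (univ.biUnion fun j => {j} ×ˢ P j) fun B hB hB2 => ?_).trans
    (card_biUnion_le_card_mul _ _ 2 fun j _ => by simpa using hPcard j)
  set y := flipOn x B
  obtain ⟨j, i, hji⟩ := (hf y).1 (by simpa [hx] using hB.2)
  have hxy : ones x ∆ ones y = B := ones_symmDiff_ones_flipOn x B
  have hweight : hamWeight x = hamWeight y := hxw.trans hB.1.symm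
  have hremoved : #(ones x \ ones y) = 1 := by
    have := two_mul_card_ones_sdiff_ones hweight
    rw [hxy] at this
    omega
  have hadded : #(ones y \ ones x) = 1 := (card_sdiff_comm hweight).symm.trans hremoved
  have hmeets : ¬Disjoint (P j) (rowSection B j) := by
    rw [← hxy, rowSection_symmDiff, hji]
    apply hP j i <;> rw [← hji, ← rowSection_sdiff]
    · exact (card_rowSection_le _ j).trans hremoved.le
    · exact (card_rowSection_le _ j).trans hadded.le
  obtain ⟨t, htP, htB⟩ := not_disjoint_iff.1 hmeets
  exact not_disjoint_iff.2 ⟨(j, t), by simpa using htP, mem_rowSection.1 htB⟩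

theorem IsRowOr.sM_cubeSlice_le (hf : IsRowOr T f) (hdisj : Pairwise (Disjoint on T))
    (hcard : ∀ i, #(T i) = 2) (w : ℕ) :
    sM (cubeSlice (α × β) w) f ≤ max (Fintype.card β) (Fintype.card α * 2) := by
  refine csSup_le' ?_
  rintro _ ⟨x, hxw, rfl⟩
  cases hx : f x with
  | true => exact le_max_of_le_left (hf.sAt_le_of_eq_true _ hx)
  | false => exact le_max_of_le_right (hf.sAt_le_of_eq_false hdisj hcard hxw hx)

end RowOr

section BlockSensitivity

open Finset Function

/-- The input whose lower half of the rows is filled with `0` and upper half with `1`: the witness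
for large block sensitivity. -/
def halfFilled (m : ℕ) (β : Type) : Fin (2 * m) × β → Bool := fun p => decide (m ≤ p.1)

/-- The row `j` of the lower half together with its mirror image in the upper half. -/
def mirrorRows {m : ℕ} (j : Fin m) : Finset (Fin (2 * m)) :=
  {j.castLE (by omega), (j.castLE (by omega)).rev}

variable {m : ℕ} {β : Type}

theorem rev_mem_mirrorRows {j : Fin m} {a : Fin (2 * m)} :
    a.rev ∈ mirrorRows j ↔ a ∈ mirrorRows j := by
  simp only [mirrorRows, mem_insert, mem_singleton, Fin.rev_eq_iff, Fin.rev_rev]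
  exact or_comm

theorem pairwise_disjoint_mirrorRows : Pairwise (Disjoint on mirrorRows (m := m)) := by
  intro j j' hne
  refine disjoint_left.2 fun a ha ha' => hne (Fin.ext ?_)
  simp only [mirrorRows, mem_insert, mem_singleton, Fin.ext_iff, Fin.val_rev,
    Fin.val_castLE] at ha ha'
  omega

theorem halfFilled_rev (a : Fin (2 * m)) (t : β) :
    halfFilled m β (a.rev, t) = !halfFilled m β (a, t) := by
  simp only [halfFilled, Fin.val_rev, ← decide_not, decide_eq_decide]
  omega

theorem flipOn_halfFilled_mirrorRows_rev [DecidableEq β] (j : Fin m) (A : Finset β)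
    (a : Fin (2 * m)) (t : β) :
    flipOn (halfFilled m β) (mirrorRows j ×ˢ A) (a.rev, t) =
      !flipOn (halfFilled m β) (mirrorRows j ×ˢ A) (a, t) := by
  simp only [flipOn, mem_product, rev_mem_mirrorRows, halfFilled_rev]
  split_ifs <;> rfl

variable [Fintype β]

theorem rowSection_ones_halfFilled (a : Fin (2 * m)) :
    rowSection (ones (halfFilled m β)) a = if m ≤ a then univ else ∅ := by
  ext t
  split_ifs with ha <;> simp [halfFilled, ha]

theorem mem_cubeSlice_of_rev_eq_not {x : Fin (2 * m) × β → Bool}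
    (hx : ∀ a t, x (a.rev, t) = !x (a, t)) :
    x ∈ cubeSlice (Fin (2 * m) × β) (m * Fintype.card β) := by
  have hweight := two_mul_hamWeight_of_perm_eq_not (Fin.revPerm.prodCongr (Equiv.refl β))
    (fun p => hx p.1 p.2)
  rw [Fintype.card_prod, Fintype.card_fin, mul_assoc] at hweight
  exact Nat.eq_of_mul_eq_mul_left two_pos hweight

variable {κ : Type*} {T : κ → Finset β} {f : (Fin (2 * m) × β → Bool) → Bool}

theorem IsRowOr.halfFilled_eq_false (hf : IsRowOr T f) (hempty : ∀ i, T i ≠ ∅)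
    (huniv : ∀ i, T i ≠ univ) : f (halfFilled m β) = false := by
  rw [← Bool.not_eq_true, hf]
  rintro ⟨a, i, hai⟩
  rw [rowSection_ones_halfFilled] at hai
  split_ifs at hai
  exacts [huniv i hai.symm, hempty i hai.symm]

variable [DecidableEq β]

theorem IsRowOr.flipOn_halfFilled_eq_true (hf : IsRowOr T f) (j : Fin m) (i : κ) :
    f (flipOn (halfFilled m β) (mirrorRows j ×ˢ T i)) = true := by
  have hj : j.castLE (by omega) ∈ mirrorRows j := mem_insert_self _ _
  refine (hf _).2 ⟨j.castLE (by omega), i, ?_⟩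
  rw [rowSection_ones_flipOn, rowSection_product_of_mem hj, rowSection_ones_halfFilled,
    if_neg (by simp)]
  exact bot_symmDiff _

theorem IsRowOr.mul_card_le_bsM [Fintype κ] (hf : IsRowOr T f) (hdisj : Pairwise (Disjoint on T))
    (hempty : ∀ i, T i ≠ ∅) (huniv : ∀ i, T i ≠ univ) :
    m * Fintype.card κ ≤ bsM (cubeSlice (Fin (2 * m) × β) (m * Fintype.card β)) f := by
  have hbs := card_le_bsM (f := f) (mem_cubeSlice_of_rev_eq_not halfFilled_rev)
    (fun p : Fin m × κ => mirrorRows p.1 ×ˢ T p.2) (fun p => ⟨?_, ?_⟩) ?_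
  · simpa using hbs
  · exact mem_cubeSlice_of_rev_eq_not (flipOn_halfFilled_mirrorRows_rev p.1 (T p.2))
  · simp [hf.flipOn_halfFilled_eq_true, hf.halfFilled_eq_false hempty huniv]
  · rintro ⟨j, i⟩ ⟨j', i'⟩ hne
    refine disjoint_product.2 ?_
    by_cases hj : j = j'
    · exact .inr (hdisj fun hi => hne (Prod.ext hj hi))
    · exact .inl (pairwise_disjoint_mirrorRows hj)

end BlockSensitivity

section Rubinstein

open Finset Function

variable {k : ℕ}

/-- The support `{2i, 2i + 1}` of the string `(00)^i 11 (00)^(k-i-1)`. -/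
def rubPattern (i : Fin k) : Finset (Fin (2 * k)) := {t | t.1 = 2 * i ∨ t.1 = 2 * i + 1}

theorem isRowOr_rub (k : ℕ) : IsRowOr rubPattern (rub k) := by
  intro x
  simp [rub, rubPattern, Finset.ext_iff]

theorem pairwise_disjoint_rubPattern : Pairwise (Disjoint on rubPattern (k := k)) := by
  intro i i' hne
  refine disjoint_left.2 fun t ht ht' => hne (Fin.ext ?_)
  simp only [rubPattern, mem_filter_univ] at ht ht'
  omega

theorem card_rubPattern (i : Fin k) : #(rubPattern i) = 2 := by
  have hpair : rubPattern i = {⟨2 * i, by omega⟩, ⟨2 * i + 1, by omega⟩} := by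
    ext; simp [rubPattern, Fin.ext_iff]
  rw [hpair, card_pair (by simp)]

theorem sM_rub_le (w : ℕ) : sM (cubeSlice (Fin (2 * k) × Fin (2 * k)) w) (rub k) ≤ 4 * k := by
  have hs := (isRowOr_rub k).sM_cubeSlice_le pairwise_disjoint_rubPattern card_rubPattern w
  rw [Fintype.card_fin] at hs
  omega

-- For `k = 1` the pattern fills its row, so the half-filled input already has value `1`.
theorem one_le_bsM_rub_one :
    1 ≤ bsM (cubeSlice (Fin (2 * 1) × Fin (2 * 1)) (2 * 1 * 1)) (rub 1) := by
  have hbs := card_le_bsM (κ := Unit) (S := cubeSlice (Fin (2 * 1) × Fin (2 * 1)) (2 * 1 * 1))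
    (f := rub 1) (x := fun p => p.1 == p.2) ?_ (fun _ => {(0, 1), (1, 1)}) (fun _ => ⟨?_, ?_⟩)
    Subsingleton.pairwise
  · simpa using hbs
  · change hamWeight _ = _
    decide
  · change hamWeight _ = _
    decide
  · decide

theorem mul_self_le_bsM_rub (k : ℕ) :
    k * k ≤ bsM (cubeSlice (Fin (2 * k) × Fin (2 * k)) (2 * k * k)) (rub k) := by
  by_cases hk : k = 1
  · subst hk
    exact one_le_bsM_rub_one
  · have hempty : ∀ i : Fin k, rubPattern i ≠ ∅ := fun i h => by
      simpa [h] using card_rubPattern i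
    have huniv : ∀ i : Fin k, rubPattern i ≠ univ := fun i h => by
      have hcard := card_rubPattern i
      rw [h, card_univ, Fintype.card_fin] at hcard
      omega
    have hbs := (isRowOr_rub k).mul_card_le_bsM pairwise_disjoint_rubPattern hempty huniv
    rwa [Fintype.card_fin, Fintype.card_fin, mul_comm k (2 * k)] at hbs

end Rubinstein

/-- The restriction of the Rubinstein function to the balanced slice of `{0,1}^n`
(`n = (2k)²`) satisfies `bs(f) ≥ s(f)²/16`; specifically `bs(f) ≥ n/4` and
`s(f) ≤ 2√n`. -/
theorem stmt19 (k : ℕ) (hk : 1 ≤ k) :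
    ((sM (cubeSlice (Fin (2 * k) × Fin (2 * k)) (2 * k * k)) (rub k) : ℝ) ^ 2 / 16 ≤
        (bsM (cubeSlice (Fin (2 * k) × Fin (2 * k)) (2 * k * k)) (rub k) : ℝ)) ∧
      (2 * k) ^ 2 / 4 ≤ bsM (cubeSlice (Fin (2 * k) × Fin (2 * k)) (2 * k * k)) (rub k) ∧
      (sM (cubeSlice (Fin (2 * k) × Fin (2 * k)) (2 * k * k)) (rub k) : ℝ) ≤
        2 * Real.sqrt (((2 * k) ^ 2 : ℕ) : ℝ) := by
  have hs : (sM (cubeSlice (Fin (2 * k) × Fin (2 * k)) (2 * k * k)) (rub k) : ℝ) ≤ 4 * k :=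
    mod_cast sM_rub_le (2 * k * k)
  have hb := mul_self_le_bsM_rub k
  refine ⟨?_, ?_, ?_⟩
  · calc _ ≤ (4 * k : ℝ) ^ 2 / 16 := by gcongr
      _ = ((k * k : ℕ) : ℝ) := by push_cast; ring
      _ ≤ _ := mod_cast hb
  · calc (2 * k) ^ 2 / 4 = k * k := Nat.div_eq_of_eq_mul_left (by norm_num) (by ring)
      _ ≤ _ := hb
  · calc _ ≤ (4 * k : ℝ) := hs
      _ = 2 * √(((2 * k) ^ 2 : ℕ) : ℝ) := by
        rw [Nat.cast_pow, Real.sqrt_sq (Nat.cast_nonneg _)]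
        push_cast
        ring
end
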